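/- arXiv:math/0312232 — 4 statements merged into one kernel-verified Lean document; each statement's English description precedes it below -/
import Mathlib

section
/- Let 0 ≤ r ≤ n and 0 ≤ s ≤ min(r, n − r). Then for every integer k with 0 ≤ k ≤ s, the Hahn kernel with parameters r1 = r and r2 = s satisfies λ_s^{r,s}(k; n) = (−1)^k · (r − s + 1)_k / [n − r]_k. -/
/-- Falling factorial `z(z-1)⋯(z-k+1)` for complex `z`. -/
noncomputable def cfall (z : ℂ) (k : ℕ) : ℂ := ∏ i ∈ Finset.range k, (z - i)

/-- Rising factorial `z(z+1)⋯(z+k-1)` for complex `z`. -/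
noncomputable def crise (z : ℂ) (k : ℕ) : ℂ := ∏ i ∈ Finset.range k, (z + i)

/-- Generalized binomial coefficient `binom(t, j)` for complex `t`. -/
noncomputable def cbinom (t : ℂ) (j : ℕ) : ℂ := cfall t j / (Nat.factorial j)

/-- The Hahn kernel `λ_s^{r1,r2}(t; n)`. -/
noncomputable def hahn (n r1 r2 s : ℕ) (t : ℂ) : ℂ :=
  ∑ j ∈ Finset.range (s + 1),
    (-1 : ℂ) ^ j * cbinom t j * cfall (s : ℂ) j * cfall ((n : ℂ) - s + 1) j /
      (cfall ((n : ℂ) - r1) j * cfall (r2 : ℂ) j)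

/-!
When `r2 = s` the factors `[s]_j` cancel, and at the natural number `t = k` the kernel becomes
`∑ j, (-1)^j * binom(k, j) * [b]_j / [a]_j` with `a = n - r` and `b = n - s + 1`. Clearing the
denominator through `[a]_k = [a]_j * [a - j]_{k-j}` and reflecting
`[a - j]_{k-j} = (-1)^(k-j) * [k - 1 - a]_{k-j}` turns this into the Chu–Vandermonde sum for
`[b + (k - 1 - a)]_k = (b - a)_k`.
-/

open Finset Polynomial

section CommRing

variable {R : Type*} [CommRing R]

lemma descPochhammer_eval_add (x y : R) (k : ℕ) :
    (descPochhammer R k).eval (x + y) = ∑ ij ∈ antidiagonal k,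
      k.choose ij.1 * ((descPochhammer R ij.1).eval x * (descPochhammer R ij.2).eval y) := by
  have smeval_eq_eval (m : ℕ) (z : R) :
      (descPochhammer ℤ m).smeval z = (descPochhammer R m).eval z := by
    rw [← aeval_eq_smeval, aeval_def, ← eval_map, descPochhammer_map]
  simpa only [smeval_eq_eval] using Ring.descPochhammer_smeval_add k (Commute.all x y)

lemma descPochhammer_eval_sub_one_sub (x : R) (k : ℕ) :
    (descPochhammer R k).eval (k - 1 - x) = (-1) ^ k * (descPochhammer R k).eval x := by
  rw [descPochhammer_eval_eq_ascPochhammer, ← ascPochhammer_eval_neg_eq_descPochhammer]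
  congr 1
  ring

lemma descPochhammer_eval_mul_eval_sub (x : R) (i j : ℕ) :
    (descPochhammer R i).eval x * (descPochhammer R j).eval (x - i) =
      (descPochhammer R (i + j)).eval x := by
  simp [← descPochhammer_mul]

lemma descPochhammer_eval_ne_zero_of_le {x : R} {j k : ℕ} (hjk : j ≤ k)
    (hk : (descPochhammer R k).eval x ≠ 0) : (descPochhammer R j).eval x ≠ 0 := by
  rw [← Nat.add_sub_cancel' hjk, ← descPochhammer_eval_mul_eval_sub] at hk
  exact left_ne_zero_of_mul hk

lemma sum_antidiagonal_neg_one_pow_mul_choose_mul_descPochhammer (a b : R) (k : ℕ) :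
    ∑ ij ∈ antidiagonal k, (-1) ^ ij.1 * (k.choose ij.1 : R) *
        ((descPochhammer R ij.1).eval b * (descPochhammer R ij.2).eval (a - ij.1)) =
      (-1) ^ k * (ascPochhammer R k).eval (b - a) := by
  have asc_eq_desc :
      (ascPochhammer R k).eval (b - a) = (descPochhammer R k).eval (b + (k - 1 - a)) := by
    rw [descPochhammer_eval_eq_ascPochhammer]
    congr 1
    ring
  rw [asc_eq_desc, descPochhammer_eval_add, mul_sum]
  refine sum_congr rfl fun ⟨i, j⟩ hij ↦ ?_
  obtain rfl : i + j = k := mem_antidiagonal.mp hij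
  have reflect : (descPochhammer R j).eval (((i + j : ℕ) : R) - 1 - a) =
      (-1) ^ j * (descPochhammer R j).eval (a - i) := by
    rw [← descPochhammer_eval_sub_one_sub]
    congr 1
    push_cast
    ring
  have sign : (-1 : R) ^ (i + j) * (-1) ^ j = (-1) ^ i := by
    rw [pow_add, mul_assoc, ← mul_pow, neg_one_mul, neg_neg, one_pow, mul_one]
  rw [reflect, ← sign]
  ring

end CommRing

lemma sum_range_neg_one_pow_mul_choose_mul_descPochhammer_div {K : Type*} [Field K] {a : K}
    (b : K) {k : ℕ} (ha : (descPochhammer K k).eval a ≠ 0) :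
    ∑ j ∈ range (k + 1), (-1) ^ j * (k.choose j : K) *
        ((descPochhammer K j).eval b / (descPochhammer K j).eval a) =
      (-1) ^ k * (ascPochhammer K k).eval (b - a) / (descPochhammer K k).eval a := by
  rw [← sum_antidiagonal_neg_one_pow_mul_choose_mul_descPochhammer, sum_div,
    Nat.sum_antidiagonal_eq_sum_range_succ_mk]
  refine sum_congr rfl fun j hj ↦ ?_
  have hjk : j ≤ k := mem_range_succ_iff.mp hj
  have split : (descPochhammer K j).eval a * (descPochhammer K (k - j)).eval (a - j) =
      (descPochhammer K k).eval a := by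
    rw [descPochhammer_eval_mul_eval_sub, Nat.add_sub_cancel' hjk]
  rw [← split] at ha ⊢
  rw [mul_div_assoc, mul_div_mul_right _ _ (right_ne_zero_of_mul ha)]

lemma cfall_eq_eval_descPochhammer (z : ℂ) (k : ℕ) : cfall z k = (descPochhammer ℂ k).eval z :=
  (descPochhammer_eval_eq_prod_range k z).symm

lemma crise_eq_eval_ascPochhammer (z : ℂ) (k : ℕ) : crise z k = (ascPochhammer ℂ k).eval z := by
  induction k with
  | zero => simp [crise]
  | succ k ih => rw [crise, prod_range_succ, ← crise, ih, ascPochhammer_succ_eval]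

lemma cfall_natCast_ne_zero {m k : ℕ} (hkm : k ≤ m) : cfall (m : ℂ) k ≠ 0 := by
  rw [cfall_eq_eval_descPochhammer, descPochhammer_eval_eq_descFactorial, Nat.cast_ne_zero]
  exact (Nat.descFactorial_pos.mpr hkm).ne'

lemma cbinom_natCast (m j : ℕ) : cbinom (m : ℂ) j = m.choose j := by
  rw [cbinom, cfall_eq_eval_descPochhammer, Nat.cast_choose_eq_descPochhammer_div]

lemma hahn_self (n r s : ℕ) (t : ℂ) :
    hahn n r s s t = ∑ j ∈ range (s + 1),
      (-1) ^ j * cbinom t j * (cfall ((n : ℂ) - s + 1) j / cfall ((n : ℂ) - r) j) := by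
  refine sum_congr rfl fun j hj ↦ ?_
  have hsj : cfall (s : ℂ) j ≠ 0 := cfall_natCast_ne_zero (mem_range_succ_iff.mp hj)
  rw [mul_right_comm _ (cfall (s : ℂ) j), mul_div_mul_right _ _ hsj, mul_div_assoc]

lemma hahn_self_natCast (n r : ℕ) {s k : ℕ} (hk : k ≤ s) :
    hahn n r s s k = ∑ j ∈ range (k + 1),
      (-1) ^ j * (k.choose j : ℂ) * (cfall ((n : ℂ) - s + 1) j / cfall ((n : ℂ) - r) j) := by
  simp only [hahn_self, cbinom_natCast]
  refine (sum_subset (range_mono (by lia)) fun j _ hj ↦ ?_).symm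
  have hkj : k < j := by simpa [Nat.lt_succ_iff] using hj
  simp [Nat.choose_eq_zero_of_lt hkj]

theorem stmt_4_general (n r s k : ℕ) (hden : cfall ((n : ℂ) - r) s ≠ 0) (hk : k ≤ s) :
    hahn n r s s (k : ℂ) =
      (-1 : ℂ) ^ k * crise ((r : ℂ) - s + 1) k / cfall ((n : ℂ) - r) k := by
  have shift : (n : ℂ) - s + 1 - (n - r) = r - s + 1 := by ring
  simp only [hahn_self_natCast n r hk, cfall_eq_eval_descPochhammer,
    crise_eq_eval_ascPochhammer] at hden ⊢
  rw [sum_range_neg_one_pow_mul_choose_mul_descPochhammer_div _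
    (descPochhammer_eval_ne_zero_of_le hk hden), shift]

/-- For `0 ≤ r ≤ n`, `0 ≤ s ≤ min(r, n-r)` and `0 ≤ k ≤ s`, the Hahn kernel with
parameters `r1 = r`, `r2 = s` satisfies `λ_s^{r,s}(k; n) = (-1)^k (r-s+1)_k / [n-r]_k`. -/
theorem stmt_4 (n r s : ℕ) (hr : r ≤ n) (hs : s ≤ min r (n - r)) (k : ℕ) (hk : k ≤ s) :
    hahn n r s s (k : ℂ) =
      (-1 : ℂ) ^ k * crise ((r : ℂ) - s + 1) k / cfall ((n : ℂ) - r) k :=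
  stmt_4_general n r s k
    (Nat.cast_sub (R := ℂ) hr ▸ cfall_natCast_ne_zero (hs.trans (min_le_right _ _))) hk
end

section
/- Let 0 ≤ r1, r2 ≤ n and 0 ≤ s ≤ min(r1, n − r1, r2, n − r2). Then for every t ∈ ℂ, λ_s^{r1,r2}(t; n) = binom(r2, s)⁻¹ · Σ_{j=0}^s binom(t, j) · binom(r2 − t, s − j) · λ_s^{r1,s}(j; n), where λ_s^{r1,s} is the Hahn kernel with second parameter r2 = s. -/
/-!
The kernel `λ_s^{r1,r2}(t; n)` depends on `r2` and `t` only through the terms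
`binom(t,i) [s]_i / [r2]_i`, which for `r2 = s` reduce to `binom(t,i)`. Hence the identity can be
checked for each `i` separately. There, trinomial revision
`binom(t,j) binom(j,i) = binom(t,i) binom(t-i,j-i)` takes `binom(t,i)` out of the sum over `j`,
Vandermonde's convolution evaluates the rest to `binom(r2-i,s-i)`, and a second trinomial revision
turns `binom(r2,s)⁻¹ binom(r2-i,s-i)` into `binom(s,i) / binom(r2,i) = [s]_i / [r2]_i`.
-/

section BinomialRing

variable {R : Type*} [CommRing R] [BinomialRing R]

theorem sum_range_choose_mul_choose (a b : R) (m : ℕ) :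
    ∑ k ∈ Finset.range (m + 1), Ring.choose a k * Ring.choose b (m - k) =
      Ring.choose (a + b) m := by
  rw [Ring.add_choose_eq m (Commute.all a b), Finset.Nat.sum_antidiagonal_eq_sum_range_succ_mk]

theorem sum_range_choose_mul_choose_sub_mul_natChoose (t r : R) {i s : ℕ} (his : i ≤ s) :
    ∑ j ∈ Finset.range (s + 1), Ring.choose t j * Ring.choose (r - t) (s - j) * (j.choose i : R) =
      Ring.choose t i * Ring.choose (r - i) (s - i) := by
  obtain ⟨m, rfl⟩ := Nat.exists_eq_add_of_le his
  have terms_lt_vanish : ∑ j ∈ Finset.range i,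
      Ring.choose t j * Ring.choose (r - t) (i + m - j) * (j.choose i : R) = 0 :=
    Finset.sum_eq_zero fun j hj ↦ by
      rw [Nat.choose_eq_zero_of_lt (Finset.mem_range.mp hj), Nat.cast_zero, mul_zero]
  have revision (k : ℕ) : ((i + k).choose i : R) * Ring.choose t (i + k) =
      Ring.choose t i * Ring.choose (t - i) k := by
    rw [← nsmul_eq_mul, Ring.choose_smul_choose t (Nat.le_add_right i k), Nat.add_sub_cancel_left]
  calc
    _ = ∑ k ∈ Finset.range (m + 1),
          Ring.choose t (i + k) * Ring.choose (r - t) (m - k) * ((i + k).choose i : R) := by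
      rw [add_assoc, Finset.sum_range_add, terms_lt_vanish, zero_add]
      simp only [Nat.add_sub_add_left]
    _ = Ring.choose t i *
          ∑ k ∈ Finset.range (m + 1), Ring.choose (t - i) k * Ring.choose (r - t) (m - k) := by
      rw [Finset.mul_sum]
      refine Finset.sum_congr rfl fun k _ ↦ ?_
      linear_combination Ring.choose (r - t) (m - k) * revision k
    _ = Ring.choose t i * Ring.choose (r - i) (i + m - i) := by
      rw [sum_range_choose_mul_choose, Nat.add_sub_cancel_left, sub_add_sub_cancel']

end BinomialRing

section Field

variable {K : Type*} [Field K] [CharZero K]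

theorem ringChoose_ne_zero_of_le {r : K} {i s : ℕ} (his : i ≤ s) (hr : Ring.choose r s ≠ 0) :
    Ring.choose r i ≠ 0 := by
  refine left_ne_zero_of_mul (b := Ring.choose (r - i) (s - i)) ?_
  rw [← Ring.choose_smul_choose r his, nsmul_eq_mul]
  exact mul_ne_zero (Nat.cast_ne_zero.mpr (Nat.choose_pos his).ne') hr

theorem natChoose_div_ringChoose {r : K} {i s : ℕ} (his : i ≤ s) (hr : Ring.choose r s ≠ 0) :
    (s.choose i : K) / Ring.choose r i = (Ring.choose r s)⁻¹ * Ring.choose (r - i) (s - i) := by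
  have hri : Ring.choose r i ≠ 0 := ringChoose_ne_zero_of_le his hr
  have revision := Ring.choose_smul_choose r his
  rw [nsmul_eq_mul] at revision
  field_simp
  linear_combination revision

/-- The Hahn kernel with free coefficients `c`: the polynomial
`∑_{i ≤ s} c i · binom(t,i) · [s]_i / [r]_i` in `t`. The ratio of falling factorials is encoded as
`binom(s,i) / binom(r,i)`. -/
noncomputable def hahnSum (c : ℕ → K) (s : ℕ) (r t : K) : K :=
  ∑ i ∈ Finset.range (s + 1), c i * Ring.choose t i * ((s.choose i : K) / Ring.choose r i)

theorem hahnSum_natCast_self (c : ℕ → K) (s : ℕ) (t : K) :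
    hahnSum c s (s : K) t = ∑ i ∈ Finset.range (s + 1), c i * Ring.choose t i := by
  refine Finset.sum_congr rfl fun i hi ↦ ?_
  have hsi : (s.choose i : K) ≠ 0 :=
    Nat.cast_ne_zero.mpr (Nat.choose_pos (Finset.mem_range_succ_iff.mp hi)).ne'
  rw [Ring.choose_natCast, div_self hsi, mul_one]

theorem stmt_6_general (c : ℕ → K) {s : ℕ} {r : K} (hr : Ring.choose r s ≠ 0) (t : K) :
    hahnSum c s r t = (Ring.choose r s)⁻¹ *
      ∑ j ∈ Finset.range (s + 1),
        Ring.choose t j * Ring.choose (r - t) (s - j) * hahnSum c s s j := by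
  calc
    _ = (Ring.choose r s)⁻¹ * ∑ i ∈ Finset.range (s + 1),
          c i * (Ring.choose t i * Ring.choose (r - i) (s - i)) := by
      rw [hahnSum, Finset.mul_sum]
      refine Finset.sum_congr rfl fun i hi ↦ ?_
      rw [natChoose_div_ringChoose (Finset.mem_range_succ_iff.mp hi) hr]
      ring
    _ = (Ring.choose r s)⁻¹ * ∑ i ∈ Finset.range (s + 1), c i * ∑ j ∈ Finset.range (s + 1),
          Ring.choose t j * Ring.choose (r - t) (s - j) * (j.choose i : K) := by
      congr 1
      refine Finset.sum_congr rfl fun i hi ↦ ?_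
      rw [sum_range_choose_mul_choose_sub_mul_natChoose t r (Finset.mem_range_succ_iff.mp hi)]
    _ = _ := by
      simp only [hahnSum_natCast_self, Ring.choose_natCast, Finset.mul_sum]
      rw [Finset.sum_comm]
      simp only [mul_left_comm]

end Field

theorem cfall_eq_factorial_mul_ringChoose (z : ℂ) (k : ℕ) :
    cfall z k = (k.factorial : ℂ) * Ring.choose z k := by
  rw [cfall, ← nsmul_eq_mul, ← Ring.descPochhammer_eq_factorial_smul_choose,
    Polynomial.descPochhammer_smeval_eq_ascPochhammer, Polynomial.ascPochhammer_smeval_eq_eval,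
    ← descPochhammer_eval_eq_ascPochhammer, descPochhammer_eval_eq_prod_range]

theorem cbinom_eq_ringChoose (t : ℂ) (j : ℕ) : cbinom t j = Ring.choose t j := by
  rw [cbinom, cfall_eq_factorial_mul_ringChoose,
    mul_div_cancel_left₀ _ (Nat.cast_ne_zero.mpr j.factorial_ne_zero)]

theorem cfall_div_cfall (a b : ℂ) (k : ℕ) :
    cfall a k / cfall b k = Ring.choose a k / Ring.choose b k := by
  rw [cfall_eq_factorial_mul_ringChoose, cfall_eq_factorial_mul_ringChoose,
    mul_div_mul_left _ _ (Nat.cast_ne_zero.mpr k.factorial_ne_zero)]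

theorem hahn_eq_hahnSum (n r1 r2 s : ℕ) (t : ℂ) :
    hahn n r1 r2 s t =
      hahnSum (fun i ↦ (-1) ^ i * cfall ((n : ℂ) - s + 1) i / cfall ((n : ℂ) - r1) i) s r2 t := by
  refine Finset.sum_congr rfl fun i _ ↦ ?_
  rw [← Ring.choose_natCast s i, ← cfall_div_cfall, cbinom_eq_ringChoose]
  ring

/-- For `0 ≤ r1, r2 ≤ n`, `0 ≤ s ≤ min(r1, n-r1, r2, n-r2)` and every `t ∈ ℂ`,
`λ_s^{r1,r2}(t; n) = binom(r2,s)⁻¹ Σ_{j=0}^s binom(t,j) binom(r2-t,s-j) λ_s^{r1,s}(j; n)`. -/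
theorem stmt_6 (n r1 r2 s : ℕ) (h1 : r1 ≤ n) (h2 : r2 ≤ n)
    (hs : s ≤ min (min r1 (n - r1)) (min r2 (n - r2))) (t : ℂ) :
    hahn n r1 r2 s t =
      ((r2.choose s : ℂ))⁻¹ *
        ∑ j ∈ Finset.range (s + 1),
          cbinom t j * cbinom ((r2 : ℂ) - t) (s - j) * hahn n r1 s s (j : ℂ) := by
  have hsr : s ≤ r2 := by omega
  have hr : Ring.choose (r2 : ℂ) s ≠ 0 := by
    rw [Ring.choose_natCast]
    exact Nat.cast_ne_zero.mpr (Nat.choose_pos hsr).ne'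
  simpa only [hahn_eq_hahnSum, cbinom_eq_ringChoose, Ring.choose_natCast]
    using stmt_6_general _ hr t
end

section
/- Let 0 ≤ r1, r2 ≤ n and 0 ≤ s ≤ min(r1, n − r1, r2, n − r2). Then the following three operator identities hold: (1) Λ_s^{r1,r2} ∘ C^{n−r1} = (−1)^s ([r1]_s/[n−r1]_s) · Λ_s^{n−r1,r2} as maps (X_{n−r1} → ℂ) → (X_{r2} → ℂ); (2) C^{r2} ∘ Λ_s^{r1,r2} = (−1)^s ([n−r2]_s/[r2]_s) · Λ_s^{r1,n−r2} as maps (X_{r1} → ℂ) → (X_{n−r2} → ℂ); (3) the adjoint of Λ_s^{r1,r2} with respect to the standard inner products ⟨ψ, φ⟩ = Σ_x ψ(x)·conj(φ(x)) satisfies (Λ_s^{r1,r2})* = ([r1]_s [n−r2]_s / ([n−r1]_s [r2]_s)) · Λ_s^{r2,r1}. -/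
/-- The operator `Λ_s^{r1,r2} : (X_{r1} → ℂ) → (X_{r2} → ℂ)` with kernel
`λ_s^{r1,r2}(|x2 \ x1|; n)`. -/
noncomputable def Lam (Ω : Type*) [Fintype Ω] [DecidableEq Ω] (n r1 r2 s : ℕ)
    (ψ : {x : Finset Ω // x.card = r1} → ℂ) : {x : Finset Ω // x.card = r2} → ℂ :=
  fun x2 => ∑ x1 : {x : Finset Ω // x.card = r1},
    hahn n r1 r2 s ((((x2 : Finset Ω) \ (x1 : Finset Ω)).card : ℕ) : ℂ) * ψ x1

/-- The complement operator `C^r : (X_r → ℂ) → (X_{r'} → ℂ)`, `(C^r ψ)(y) = ψ(Ω \ y)`,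
where `r + r' = |Ω|`. -/
noncomputable def ComplOp {Ω : Type*} [Fintype Ω] [DecidableEq Ω] (r r' : ℕ)
    (h : r + r' = Fintype.card Ω) (ψ : {x : Finset Ω // x.card = r} → ℂ) :
    {x : Finset Ω // x.card = r'} → ℂ :=
  fun y => ψ ⟨(y : Finset Ω)ᶜ, by rw [Finset.card_compl, y.2]; omega⟩

/-!
For `a = n - r1`, `b = r2`, `N = n - s + 1` the Hahn kernel is the terminating hypergeometric sum
`₃F₂(-s, -N, -t; -a, -b; 1)`, visibly symmetric in `a` and `b`. Sheppard's transformation relates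
its values at `t` and `b - t`, replacing `a` by `n - a`. It comes from using Chu–Vandermonde
twice: once to expand in the falling factorials of `t`, and, after interchanging the two
sums, once to evaluate the inner sum. As `|x2 \ x1|` and `|x2 \ x1ᶜ|` add up to `r2`, this is the
first identity; the symmetry in `a` and `b` turns it into the second, and applying it to
both kernels of the third reduces them to the same function of `|x1 ∩ x2|`.
-/

/-- The falling factorial `z (z - 1) ⋯ (z - k + 1)` in any ring. -/
local notation:80 z:81 "^↓" k:81 => Polynomial.eval z (descPochhammer _ k)

section CommRing

variable {R : Type*} [CommRing R]

lemma descPochhammer_eval_add_index (z : R) (k m : ℕ) :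
    z^↓(k + m) = z^↓k * (z - k)^↓m := by
  simp [← descPochhammer_mul, Polynomial.eval_comp]

lemma descPochhammer_eval_eq_neg_one_pow_mul (z : R) (k : ℕ) :
    z^↓k = (-1) ^ k * (k - 1 - z)^↓k := by
  rw [← ascPochhammer_eval_neg_eq_descPochhammer, descPochhammer_eval_eq_ascPochhammer]
  congr 1
  ring

lemma descPochhammer_eval_add_s8 (x y : R) (m : ℕ) :
    (x + y)^↓m = ∑ i ∈ Finset.range (m + 1), m.choose i * (x^↓i * y^↓(m - i)) := by
  have eval_eq_smeval (z : R) (k : ℕ) : z^↓k = (descPochhammer ℤ k).smeval z := by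
    rw [← Polynomial.aeval_eq_smeval, ← descPochhammer_map (algebraMap ℤ R),
      Polynomial.eval_map_algebraMap]
  simp only [eval_eq_smeval, Ring.descPochhammer_smeval_add m (Commute.all x y)]
  exact Finset.Nat.sum_antidiagonal_eq_sum_range_succ_mk _ m

lemma descPochhammer_eval_sub (b t : R) (m : ℕ) :
    (b - t)^↓m =
      ∑ i ∈ Finset.range (m + 1), (-1) ^ i * m.choose i * (t^↓i * (b - i)^↓(m - i)) := by
  rw [descPochhammer_eval_eq_neg_one_pow_mul, show (m : R) - 1 - (b - t) = t + (m - 1 - b) by ring,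
    descPochhammer_eval_add_s8, Finset.mul_sum]
  refine Finset.sum_congr rfl fun i hi => ?_
  obtain ⟨k, rfl⟩ := Nat.exists_eq_add_of_le (Finset.mem_range_succ_iff.mp hi)
  have hrefl : ((i + k : ℕ) - 1 - b)^↓k = (-1) ^ k * (b - i)^↓k := by
    rw [descPochhammer_eval_eq_neg_one_pow_mul]
    congr 2
    push_cast
    ring
  have hsq : (-1 : R) ^ k * (-1) ^ k = 1 := pow_mul_pow_eq_one _ (by simp)
  rw [Nat.add_sub_cancel_left, hrefl, pow_add]
  linear_combination (-1) ^ i * ((i + k).choose i : R) * (t^↓i * (b - i)^↓k) * hsq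

lemma sum_neg_one_pow_choose_mul_sum_neg_one_pow_choose (s : ℕ) (f w : ℕ → R) :
    ∑ j ∈ Finset.range (s + 1), (-1) ^ j * s.choose j *
        (w j * ∑ k ∈ Finset.range (j + 1), (-1) ^ k * j.choose k * f k) =
      ∑ k ∈ Finset.range (s + 1), s.choose k *
        (f k * ∑ i ∈ Finset.range (s - k + 1), (-1) ^ i * (s - k).choose i * w (k + i)) := by
  let F (k i : ℕ) : R := s.choose k * f k * ((-1) ^ i * (s - k).choose i * w (k + i))
  trans ∑ j ∈ Finset.range (s + 1), ∑ k ∈ Finset.range (j + 1), F k (j - k)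
  · simp only [Finset.mul_sum]
    refine Finset.sum_congr rfl fun j _ => Finset.sum_congr rfl fun k hk => ?_
    obtain ⟨i, rfl⟩ := Nat.exists_eq_add_of_le (Finset.mem_range_succ_iff.mp hk)
    have hchoose : (s.choose (k + i) * (k + i).choose k : R) = s.choose k * (s - k).choose i := by
      have hmul := Nat.choose_mul (n := s) (Nat.le_add_right k i)
      rw [Nat.add_sub_cancel_left] at hmul
      rw [← Nat.cast_mul, ← Nat.cast_mul, hmul]
    have hsq : (-1 : R) ^ k * (-1) ^ k = 1 := pow_mul_pow_eq_one _ (by simp)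
    simp only [F, Nat.add_sub_cancel_left]
    linear_combination (-1) ^ i * w (k + i) * f k *
      ((s.choose (k + i) * (k + i).choose k : R) * hsq + hchoose)
  · rw [Finset.sum_range_diag_flip]
    refine Finset.sum_congr rfl fun k hk => ?_
    simp only [F, Finset.mul_sum, mul_assoc, Nat.sub_add_comm (Finset.mem_range_succ_iff.mp hk)]

end CommRing

section Field

variable {K : Type*} [Field K]

lemma descPochhammer_eval_ne_zero_of_le_s8 {z : K} {k s : ℕ} (h : z^↓s ≠ 0) (hks : k ≤ s) :
    z^↓k ≠ 0 := by
  obtain ⟨m, rfl⟩ := Nat.exists_eq_add_of_le hks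
  rw [descPochhammer_eval_add_index] at h
  exact left_ne_zero_of_mul h

lemma sum_neg_one_pow_choose_mul_descPochhammer_div {b : K} {m : ℕ} (hb : b^↓m ≠ 0) (t : K) :
    ∑ i ∈ Finset.range (m + 1), (-1) ^ i * m.choose i * (t^↓i / b^↓i) =
      (b - t)^↓m / b^↓m := by
  rw [descPochhammer_eval_sub, Finset.sum_div]
  refine Finset.sum_congr rfl fun i hi => ?_
  obtain ⟨k, rfl⟩ := Nat.exists_eq_add_of_le (Finset.mem_range_succ_iff.mp hi)
  rw [descPochhammer_eval_add_index] at hb ⊢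
  have hbi := left_ne_zero_of_mul hb
  have hbk := right_ne_zero_of_mul hb
  rw [Nat.add_sub_cancel_left]
  field_simp

/-- The terminating hypergeometric series `₃F₂(-s, -N, -t; -a, -b; 1)`. Its rising factorials are
written as falling ones, the signs combining to `(-1) ^ j`, and `(-s)_j / j!` as a binomial
coefficient, so that the definition makes sense in every characteristic. -/
noncomputable def hypergeometric₃F₂ (s : ℕ) (N t a b : K) : K :=
  ∑ j ∈ Finset.range (s + 1),
    (-1) ^ j * s.choose j * (N^↓j / a^↓j * (t^↓j / b^↓j))

lemma hypergeometric₃F₂_swap (s : ℕ) (N t a b : K) :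
    hypergeometric₃F₂ s N t a b = hypergeometric₃F₂ s N t b a := by
  unfold hypergeometric₃F₂
  refine Finset.sum_congr rfl fun j _ => ?_
  rw [div_mul_div_comm, div_mul_div_comm, mul_comm (a^↓j)]

lemma sum_neg_one_pow_choose_mul_descPochhammer_div_add {a : K} {k m : ℕ}
    (ha : a^↓(k + m) ≠ 0) (N : K) :
    ∑ i ∈ Finset.range (m + 1), (-1) ^ i * m.choose i * (N^↓(k + i) / a^↓(k + i)) =
      N^↓k * (a - N)^↓m / a^↓(k + m) := by
  simp only [descPochhammer_eval_add_index _ k] at ha ⊢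
  have hvand := sum_neg_one_pow_choose_mul_descPochhammer_div (right_ne_zero_of_mul ha) (N - k)
  rw [sub_sub_sub_cancel_right] at hvand
  rw [mul_div_mul_comm, ← hvand, Finset.mul_sum]
  refine Finset.sum_congr rfl fun i _ => ?_
  rw [mul_div_mul_comm]
  ring

/-- Sheppard's transformation. -/
lemma hypergeometric₃F₂_eq_of_add_eq {s : ℕ} {N a a' b t u : K} (haa' : a + a' = N + s - 1)
    (htu : t + u = b) (ha : a^↓s ≠ 0) (ha' : a'^↓s ≠ 0) (hb : b^↓s ≠ 0) :
    hypergeometric₃F₂ s N t a b =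
      (-1) ^ s * (a'^↓s / a^↓s) * hypergeometric₃F₂ s N u a' b := by
  have hexpand : hypergeometric₃F₂ s N t a b = ∑ j ∈ Finset.range (s + 1), (-1) ^ j * s.choose j *
      (N^↓j / a^↓j *
        ∑ k ∈ Finset.range (j + 1), (-1) ^ k * j.choose k * (u^↓k / b^↓k)) := by
    refine Finset.sum_congr rfl fun j hj => ?_
    rw [sum_neg_one_pow_choose_mul_descPochhammer_div
      (descPochhammer_eval_ne_zero_of_le_s8 hb (Finset.mem_range_succ_iff.mp hj)),
      ← htu, add_sub_cancel_right]
  rw [hexpand, sum_neg_one_pow_choose_mul_sum_neg_one_pow_choose, hypergeometric₃F₂, Finset.mul_sum]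
  refine Finset.sum_congr rfl fun k hk => ?_
  obtain ⟨m, rfl⟩ := Nat.exists_eq_add_of_le (Finset.mem_range_succ_iff.mp hk)
  have ha'k := descPochhammer_eval_ne_zero_of_le_s8 ha' (Nat.le_add_right k m)
  have hrefl : (a - N)^↓m = (-1) ^ m * (a' - k)^↓m := by
    rw [descPochhammer_eval_eq_neg_one_pow_mul]
    congr 2
    push_cast at haa'
    linear_combination -haa'
  have hsq : (-1 : K) ^ k * (-1) ^ k = 1 := pow_mul_pow_eq_one _ (by simp)
  rw [Nat.add_sub_cancel_left, sum_neg_one_pow_choose_mul_descPochhammer_div_add ha, hrefl,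
    descPochhammer_eval_add_index a', pow_add]
  field_simp
  linear_combination -((k + m).choose k : K) * u^↓k * N^↓k * (a' - k)^↓m / b^↓k * hsq

end Field

lemma cfall_eq_descPochhammer_eval (z : ℂ) (k : ℕ) : cfall z k = z^↓k :=
  (descPochhammer_eval_eq_prod_range k z).symm

lemma cfall_natCast_ne_zero_s8 {z k : ℕ} (h : k ≤ z) : cfall z k ≠ 0 := by
  rw [cfall_eq_descPochhammer_eval, descPochhammer_eval_eq_descFactorial, Nat.cast_ne_zero]
  exact (Nat.descFactorial_pos.mpr h).ne'

lemma conj_cfall (z : ℂ) (k : ℕ) : starRingEnd ℂ (cfall z k) = cfall (starRingEnd ℂ z) k := by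
  simp [cfall]

lemma hahn_eq_hypergeometric₃F₂ (n r1 r2 s : ℕ) (t : ℂ) :
    hahn n r1 r2 s t = hypergeometric₃F₂ s (n - s + 1 : ℂ) t (n - r1) r2 := by
  unfold hahn hypergeometric₃F₂ cbinom
  refine Finset.sum_congr rfl fun j _ => ?_
  have hfact : (j.factorial : ℂ) ≠ 0 := Nat.cast_ne_zero.mpr j.factorial_ne_zero
  simp only [cfall_eq_descPochhammer_eval]
  rw [descPochhammer_eval_eq_descFactorial ℂ s, Nat.descFactorial_eq_factorial_mul_choose,
    Nat.cast_mul]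
  field_simp

lemma conj_hahn_natCast (n r1 r2 s t : ℕ) :
    starRingEnd ℂ (hahn n r1 r2 s t) = hahn n r1 r2 s t := by
  simp [hahn, cbinom, conj_cfall]

section HahnKernel

variable {n r1 r1' r2 r2' s : ℕ} {t u : ℂ}

lemma hahn_eq_of_add_eq_right (hr1 : r1' + r1 = n) (hs1 : s ≤ r1) (hs1' : s ≤ r1') (hs2 : s ≤ r2)
    (htu : t + u = r2) :
    hahn n r1 r2 s t = (-1) ^ s * (cfall r1 s / cfall (n - r1) s) * hahn n r1' r2 s u := by
  have hn1 : (n : ℂ) - r1 = r1' := by simp [← hr1]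
  have hn1' : (n : ℂ) - r1' = r1 := by simp [← hr1]
  have ne₁ := cfall_natCast_ne_zero_s8 hs1
  have ne₁' := cfall_natCast_ne_zero_s8 hs1'
  have ne₂ := cfall_natCast_ne_zero_s8 hs2
  simp only [cfall_eq_descPochhammer_eval] at ne₁ ne₁' ne₂
  rw [hahn_eq_hypergeometric₃F₂, hahn_eq_hypergeometric₃F₂, hn1, hn1', cfall_eq_descPochhammer_eval,
    cfall_eq_descPochhammer_eval]
  exact hypergeometric₃F₂_eq_of_add_eq (by linear_combination -hn1) htu ne₁' ne₁ ne₂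

lemma hahn_swap (hr1 : r1' + r1 = n) (hr2 : r2 + r2' = n) :
    hahn n r1 r2 s t = hahn n r2' r1' s t := by
  have h1 : (n : ℂ) - r1 = r1' := by simp [← hr1]
  have h2 : (n : ℂ) - r2' = r2 := by simp [← hr2]
  rw [hahn_eq_hypergeometric₃F₂, hahn_eq_hypergeometric₃F₂, h1, h2, hypergeometric₃F₂_swap]

lemma hahn_eq_of_add_eq_left (hr1 : r1 ≤ n) (hr2 : r2 + r2' = n) (hs1 : s ≤ n - r1)
    (hs2 : s ≤ r2) (hs2' : s ≤ r2') (htu : t + u = n - r1) :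
    hahn n r1 r2 s t = (-1) ^ s * (cfall (n - r2) s / cfall r2 s) * hahn n r1 r2' s u := by
  have hr1' : n - r1 + r1 = n := Nat.sub_add_cancel hr1
  have hn2 : (n : ℂ) - r2 = r2' ∧ (n : ℂ) - r2' = r2 := by simp [← hr2]
  rw [hahn_swap hr1' hr2, hahn_swap (t := u) hr1' ((add_comm _ _).trans hr2),
    hahn_eq_of_add_eq_right hr2 hs2' hs2 hs1 (by rw [htu, Nat.cast_sub hr1]), hn2.1, hn2.2]

lemma hahn_eq_of_add_eq_add (hr1 : r1 ≤ n) (hr2 : r2 ≤ n) (hs1 : s ≤ r1) (hs1' : s ≤ n - r1)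
    (hs2 : s ≤ r2) (hs2' : s ≤ n - r2) (htu : t + r1 = u + r2) :
    hahn n r1 r2 s t =
      cfall r1 s * cfall (n - r2) s / (cfall (n - r1) s * cfall r2 s) * hahn n r2 r1 s u := by
  have hr1' : n - r1 + r1 = n := Nat.sub_add_cancel hr1
  have hr2' : n - r2 + r2 = n := Nat.sub_add_cancel hr2
  have ne₂ := cfall_natCast_ne_zero_s8 hs2
  have ne₂' := cfall_natCast_ne_zero_s8 hs2'
  rw [Nat.cast_sub hr2] at ne₂'
  rw [hahn_eq_of_add_eq_right (u := r2 - t) hr1' hs1 hs1' hs2 (by ring),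
    hahn_eq_of_add_eq_right (u := r2 - t) hr2' hs2 hs2' hs1 (by linear_combination -htu),
    hahn_swap ((add_comm _ _).trans hr1') ((add_comm _ _).trans hr2')]
  field_simp

end HahnKernel

section Operators

variable {Ω : Type*} [Fintype Ω] [DecidableEq Ω] {r1 r1' r2 r2' s : ℕ}

lemma card_sdiff_add_card_sdiff_compl (x y : Finset Ω) :
    (x \ y).card + (x \ yᶜ).card = x.card := by
  rw [sdiff_compl, Finset.inf_eq_inter, Finset.card_sdiff_add_card_inter]

lemma lam_complOp (h : r1' + r1 = Fintype.card Ω) (hs1 : s ≤ r1) (hs1' : s ≤ r1') (hs2 : s ≤ r2)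
    (ψ : {x : Finset Ω // x.card = r1'} → ℂ) :
    Lam Ω (Fintype.card Ω) r1 r2 s (ComplOp r1' r1 h ψ) =
      ((-1 : ℂ) ^ s * (cfall r1 s / cfall (Fintype.card Ω - r1) s)) •
        Lam Ω (Fintype.card Ω) r1' r2 s ψ := by
  ext x2
  simp only [Lam, ComplOp, Pi.smul_apply, smul_eq_mul, Finset.mul_sum]
  let compl : {x : Finset Ω // x.card = r1} ≃ {x : Finset Ω // x.card = r1'} :=
    Set.powersetCard.compl h
  refine Fintype.sum_equiv compl _ _ fun x1 => ?_
  have hcard : ((x2.val \ x1.val).card + (x2.val \ x1.valᶜ).card : ℂ) = r2 := by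
    exact_mod_cast (card_sdiff_add_card_sdiff_compl x2.val x1.val).trans x2.2
  rw [hahn_eq_of_add_eq_right h hs1 hs1' hs2 hcard, mul_assoc]
  rfl

lemma complOp_lam (hr1 : r1 ≤ Fintype.card Ω) (h : r2 + r2' = Fintype.card Ω)
    (hs1 : s ≤ Fintype.card Ω - r1) (hs2 : s ≤ r2) (hs2' : s ≤ r2')
    (ψ : {x : Finset Ω // x.card = r1} → ℂ) :
    ComplOp r2 r2' h (Lam Ω (Fintype.card Ω) r1 r2 s ψ) =
      ((-1 : ℂ) ^ s * (cfall (Fintype.card Ω - r2) s / cfall r2 s)) •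
        Lam Ω (Fintype.card Ω) r1 r2' s ψ := by
  ext x2
  simp only [Lam, ComplOp, Pi.smul_apply, smul_eq_mul, Finset.mul_sum]
  refine Fintype.sum_congr _ _ fun x1 => ?_
  have hcard : ((x2.valᶜ \ x1.val).card + (x2.val \ x1.val).card : ℂ) = Fintype.card Ω - r1 := by
    have hcompl := card_sdiff_add_card_sdiff_compl x1.valᶜ x2.val
    rw [compl_sdiff_compl, Finset.card_compl, x1.2, sdiff_eq, inf_comm, ← sdiff_eq] at hcompl
    rw [← Nat.cast_sub hr1]
    exact_mod_cast hcompl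
  rw [hahn_eq_of_add_eq_left hr1 h hs1 hs2 hs2' hcard, mul_assoc]

lemma sum_lam_mul_conj (hr1 : r1 ≤ Fintype.card Ω) (hr2 : r2 ≤ Fintype.card Ω) (hs1 : s ≤ r1)
    (hs1' : s ≤ Fintype.card Ω - r1) (hs2 : s ≤ r2) (hs2' : s ≤ Fintype.card Ω - r2)
    (ψ : {x : Finset Ω // x.card = r1} → ℂ) (φ : {x : Finset Ω // x.card = r2} → ℂ) :
    ∑ x2 : {x : Finset Ω // x.card = r2},
        Lam Ω (Fintype.card Ω) r1 r2 s ψ x2 * starRingEnd ℂ (φ x2) =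
      ∑ x1 : {x : Finset Ω // x.card = r1}, ψ x1 * starRingEnd ℂ
        (cfall r1 s * cfall (Fintype.card Ω - r2) s /
            (cfall (Fintype.card Ω - r1) s * cfall r2 s) *
          Lam Ω (Fintype.card Ω) r2 r1 s φ x1) := by
  simp only [Lam, Finset.sum_mul, Finset.mul_sum, map_sum]
  rw [Finset.sum_comm]
  refine Fintype.sum_congr _ _ fun x1 => Fintype.sum_congr _ _ fun x2 => ?_
  have hcard : ((x2.val \ x1.val).card + r1 : ℂ) = (x1.val \ x2.val).card + r2 := by
    have hunion := Finset.card_sdiff_add_card x2.val x1.val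
    rw [Finset.union_comm, ← Finset.card_sdiff_add_card, x1.2, x2.2] at hunion
    exact_mod_cast hunion
  rw [← mul_assoc, ← hahn_eq_of_add_eq_add hr1 hr2 hs1 hs1' hs2 hs2' hcard, map_mul,
    conj_hahn_natCast]
  ring

end Operators

/-- The three operator identities of Proposition 1:
`Λ_s^{r1,r2} ∘ C^{n-r1} = (-1)^s ([r1]_s/[n-r1]_s) Λ_s^{n-r1,r2}`,
`C^{r2} ∘ Λ_s^{r1,r2} = (-1)^s ([n-r2]_s/[r2]_s) Λ_s^{r1,n-r2}`, and
`(Λ_s^{r1,r2})* = ([r1]_s [n-r2]_s/([n-r1]_s [r2]_s)) Λ_s^{r2,r1}` (in the form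
`⟨Λ_s^{r1,r2} ψ, φ⟩ = ⟨ψ, c Λ_s^{r2,r1} φ⟩` for the standard inner products). -/
theorem stmt_8 {Ω : Type*} [Fintype Ω] [DecidableEq Ω] (n r1 r2 s : ℕ)
    (hn : Fintype.card Ω = n) (h1 : r1 ≤ n) (h2 : r2 ≤ n)
    (hs : s ≤ min (min r1 (n - r1)) (min r2 (n - r2)))
    (hc1 : n - r1 + r1 = Fintype.card Ω) (hc2 : r2 + (n - r2) = Fintype.card Ω) :
    (∀ ψ : {x : Finset Ω // x.card = n - r1} → ℂ,
      Lam Ω n r1 r2 s (ComplOp (n - r1) r1 hc1 ψ) =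
        ((-1 : ℂ) ^ s * (cfall (r1 : ℂ) s / cfall ((n : ℂ) - r1) s)) •
          Lam Ω n (n - r1) r2 s ψ) ∧
    (∀ ψ : {x : Finset Ω // x.card = r1} → ℂ,
      ComplOp r2 (n - r2) hc2 (Lam Ω n r1 r2 s ψ) =
        ((-1 : ℂ) ^ s * (cfall ((n : ℂ) - r2) s / cfall (r2 : ℂ) s)) •
          Lam Ω n r1 (n - r2) s ψ) ∧
    (∀ (ψ : {x : Finset Ω // x.card = r1} → ℂ) (φ : {x : Finset Ω // x.card = r2} → ℂ),
      ∑ x2 : {x : Finset Ω // x.card = r2},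
          Lam Ω n r1 r2 s ψ x2 * (starRingEnd ℂ) (φ x2) =
        ∑ x1 : {x : Finset Ω // x.card = r1},
          ψ x1 * (starRingEnd ℂ)
            ((cfall (r1 : ℂ) s * cfall ((n : ℂ) - r2) s /
                (cfall ((n : ℂ) - r1) s * cfall (r2 : ℂ) s)) *
              Lam Ω n r2 r1 s φ x1)) := by
  subst hn
  obtain ⟨⟨hs1, hs1'⟩, hs2, hs2'⟩ : (s ≤ r1 ∧ s ≤ _ - r1) ∧ s ≤ r2 ∧ s ≤ _ - r2 := by
    simpa only [le_min_iff] using hs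
  exact ⟨lam_complOp hc1 hs1 hs1' hs2, complOp_lam h1 hc2 hs1' hs2 hs2',
    sum_lam_mul_conj h1 h2 hs1 hs1' hs2 hs2'⟩
end

section
/- Let 0 ≤ r1, r2, r3 ≤ n and let 0 ≤ s ≤ min(rᵢ, n − rᵢ) for i = 1, 2, 3. Then Λ_s^{r2,r3} ∘ Λ_s^{r1,r2} = (binom(n, r2) / (binom(n, s) − binom(n, s−1))) · Λ_s^{r1,r3} as linear maps (X_{r1} → ℂ) → (X_{r3} → ℂ), where binom(n, −1) = 0. -/
/-!
Fix an `r₁`-set `x₁` and let `f` be the function `y ↦ λ_s^{r₁,s}(|y \ x₁|)` on `s`-sets. Averaging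
`f` over the `s`-subsets of `x` gives `λ_s^{r₁,|x|}(|x \ x₁|)`, and a first-order recurrence for
the kernel says that `f` is harmonic: its sum over the `s`-sets containing a given `(s-1)`-set
vanishes.

In the kernel of `Λ_s^{r₂,r₃}`, the factor `binom(|x₃ \ x₂|, j)` counts the `j`-sets `w ⊆ x₃`
disjoint from `x₂`, so applying the operator amounts to summing `f` over the `s`-sets disjoint from
`w`. By inclusion–exclusion and harmonicity this is `(-1)^s` times the sum of `f` over the
`s`-subsets of `w`, so only `j = s` contributes, with a multiple of `f w`. Hence `Λ_s^{r₂,r₃}` sends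
averages of `f` to a constant times averages of `f`, and what remains is a binomial identity for the
constant.
-/

section

open Finset

section Subsets

variable {α M : Type*} [AddCommMonoid M]

lemma sum_powersetCard_sum_powersetCard (S : Finset α) (f : Finset α → M) {j r : ℕ} (hjr : j ≤ r) :
    ∑ x ∈ S.powersetCard r, ∑ y ∈ x.powersetCard j, f y =
      (#S - j).choose (r - j) • ∑ y ∈ S.powersetCard j, f y := by
  classical
  rw [sum_comm' (t' := S.powersetCard j) (s' := fun y ↦ {x ∈ S.powersetCard r | y ⊆ x}), smul_sum]
  · refine sum_congr rfl fun y hy ↦ ?_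
    obtain ⟨hyS, rfl⟩ := mem_powersetCard.1 hy
    rw [sum_const, card_filter_powersetCard_subset y S r hyS hjr]
  · intro x y
    simp only [mem_filter, mem_powersetCard]
    exact ⟨fun ⟨hx, hyx, hy⟩ ↦ ⟨⟨hx, hyx⟩, hyx.trans hx.1, hy⟩,
      fun ⟨⟨hx, hyx⟩, _, hy⟩ ↦ ⟨hx, hyx, hy⟩⟩

variable [DecidableEq α]

lemma filter_disjoint_powersetCard (S T : Finset α) (j : ℕ) :
    {w ∈ S.powersetCard j | Disjoint w T} = (S \ T).powersetCard j := by
  ext w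
  simp only [mem_filter, mem_powersetCard, subset_sdiff]
  tauto

lemma sum_choose_card_sdiff (S T : Finset α) {j r : ℕ} (hjr : j ≤ r) :
    ∑ x ∈ S.powersetCard r, (#(x \ T)).choose j =
      (#S - j).choose (r - j) * (#(S \ T)).choose j := by
  have choose_eq_sum (x : Finset α) :
      (#(x \ T)).choose j = ∑ w ∈ x.powersetCard j, if Disjoint w T then 1 else 0 := by
    rw [← card_filter, filter_disjoint_powersetCard, card_powersetCard]
  simp only [choose_eq_sum, sum_powersetCard_sum_powersetCard S _ hjr, smul_eq_mul]

variable [Fintype α]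

lemma sum_choose_card_sdiff_nsmul (z : Finset α) (F : Finset α → M) (j r : ℕ) :
    ∑ x ∈ (univ : Finset α).powersetCard r, (#(z \ x)).choose j • F x =
      ∑ w ∈ z.powersetCard j, ∑ x ∈ wᶜ.powersetCard r, F x := by
  rw [sum_comm' (t' := univ.powersetCard r) (s' := fun x ↦ (z \ x).powersetCard j)]
  · simp only [sum_const, card_powersetCard]
  · intro w x
    simp only [mem_powersetCard, subset_sdiff, subset_compl_iff_disjoint_left, subset_univ]
    tauto

lemma sum_superset_of_card_eq (f : Finset α → M) {z : Finset α} {s : ℕ} (hz : #z = s) :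
    ∑ y ∈ univ.powersetCard s with z ⊆ y, f y = f z := by
  have : ({y ∈ univ.powersetCard s | z ⊆ y} : Finset (Finset α)) = {z} := by
    ext y
    simp only [mem_filter, mem_powersetCard_univ, mem_singleton]
    exact ⟨fun ⟨hy, hzy⟩ ↦ (eq_of_subset_of_card_le hzy (hy.trans hz.symm).le).symm,
      by rintro rfl; exact ⟨hz, Subset.rfl⟩⟩
  rw [this, sum_singleton]

lemma sum_compl_sum_superset_insert (f : Finset α → M) (s : ℕ) (z : Finset α) :
    ∑ a ∈ zᶜ, ∑ y ∈ univ.powersetCard s with insert a z ⊆ y, f y =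
      (s - #z) • ∑ y ∈ univ.powersetCard s with z ⊆ y, f y := by
  rw [sum_comm' (t' := {y ∈ univ.powersetCard s | z ⊆ y}) (s' := fun y ↦ y \ z), smul_sum]
  · refine sum_congr rfl fun y hy ↦ ?_
    obtain ⟨hy, hzy⟩ := mem_filter.1 hy
    rw [sum_const, card_sdiff_of_subset hzy, (mem_powersetCard.1 hy).2]
  · intro a y
    simp only [mem_compl, mem_filter, mem_powersetCard, insert_subset_iff, mem_sdiff]
    tauto

lemma sum_powersetCard_compl_eq_sum_powerset {A : Type*} [AddCommGroup A] (f : Finset α → A)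
    (s : ℕ) (S : Finset α) :
    ∑ y ∈ Sᶜ.powersetCard s, f y =
      ∑ w ∈ S.powerset, (-1 : ℤ) ^ #w • ∑ y ∈ univ.powersetCard s with w ⊆ y, f y := by
  calc ∑ y ∈ Sᶜ.powersetCard s, f y
      = ∑ y ∈ univ.powersetCard s, if S ∩ y = ∅ then f y else 0 := by
        simp only [← disjoint_iff_inter_eq_empty, disjoint_comm (a := S), ← sum_filter,
          filter_disjoint_powersetCard, compl_eq_univ_sdiff]
    _ = ∑ y ∈ univ.powersetCard s, ∑ w ∈ (S ∩ y).powerset, (-1 : ℤ) ^ #w • f y := by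
        simp only [← sum_smul, sum_powerset_neg_one_pow_card, ite_smul, one_smul, zero_smul]
    _ = ∑ w ∈ S.powerset, (-1 : ℤ) ^ #w • ∑ y ∈ univ.powersetCard s with w ⊆ y, f y := by
        simp only [smul_sum]
        refine sum_comm' fun y w ↦ ?_
        simp only [mem_filter, mem_powerset, subset_inter_iff]
        tauto

end Subsets

section Harmonic

variable {Ω M : Type*} [Fintype Ω] [DecidableEq Ω] [AddCommGroup M] {s : ℕ} {f : Finset Ω → M}

/-- A function on the `s`-subsets of `Ω` is *harmonic* if its sum over the `s`-sets containing any
given `(s-1)`-set vanishes. When `2 * s ≤ #Ω`, the complex-valued ones form the irreducible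
component of the permutation module on `s`-sets that does not occur on smaller sets. A function on
`s`-sets is encoded as a function on all finsets, whose other values are irrelevant. -/
def IsHarmonic (s : ℕ) (f : Finset Ω → M) : Prop :=
  ∀ z : Finset Ω, #z + 1 = s → ∑ a ∈ zᶜ, f (insert a z) = 0

namespace IsHarmonic

variable [IsAddTorsionFree M]

lemma sum_superset_eq_zero (hf : IsHarmonic s f) (z : Finset Ω) (hz : #z < s) :
    ∑ y ∈ univ.powersetCard s with z ⊆ y, f y = 0 := by
  have card_insert_compl {a : Ω} (ha : a ∈ zᶜ) : #(insert a z) = #z + 1 :=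
    card_insert_of_notMem (mem_compl.1 ha)
  rw [← nsmul_eq_zero_iff_right (Nat.sub_ne_zero_of_lt hz), ← sum_compl_sum_superset_insert]
  obtain hz' | hz' := (Nat.succ_le_of_lt hz).eq_or_lt
  · rw [← hf z hz']
    exact sum_congr rfl fun a ha ↦ sum_superset_of_card_eq f ((card_insert_compl ha).trans hz')
  · exact sum_eq_zero fun a ha ↦
      hf.sum_superset_eq_zero (insert a z) ((card_insert_compl ha).trans_lt hz')
termination_by s - #z
decreasing_by have := card_insert_compl ha; lia

lemma sum_powersetCard_compl (hf : IsHarmonic s f) (S : Finset Ω) :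
    ∑ y ∈ Sᶜ.powersetCard s, f y = (-1 : ℤ) ^ s • ∑ y ∈ S.powersetCard s, f y := by
  rw [sum_powersetCard_compl_eq_sum_powerset, smul_sum]
  symm
  refine sum_subset_zero_on_sdiff (fun w hw ↦ mem_powerset.2 (mem_powersetCard.1 hw).1) ?_ ?_
  · intro w hw
    have hws : #w ≠ s := fun h ↦
      (mem_sdiff.1 hw).2 (mem_powersetCard.2 ⟨mem_powerset.1 (mem_sdiff.1 hw).1, h⟩)
    obtain hlt | hgt := hws.lt_or_gt
    · rw [hf.sum_superset_eq_zero w hlt, smul_zero]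
    · rw [filter_false_of_mem, sum_empty, smul_zero]
      exact fun y hy hwy ↦ ((card_le_card hwy).trans (mem_powersetCard.1 hy).2.le).not_gt hgt
  · intro w hw
    have hws : #w = s := (mem_powersetCard.1 hw).2
    rw [sum_superset_of_card_eq f hws, hws]

lemma sum_choose_card_sdiff_nsmul (hf : IsHarmonic s f) (z : Finset Ω) {j r : ℕ} (hjs : j ≤ s)
    (hsr : s ≤ r) :
    ∑ x ∈ univ.powersetCard r, (#(z \ x)).choose j • ∑ y ∈ x.powersetCard s, f y =
      if j = s then
        (-1 : ℤ) ^ s • (Fintype.card Ω - 2 * s).choose (r - s) • ∑ y ∈ z.powersetCard s, f y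
      else 0 := by
  rw [_root_.sum_choose_card_sdiff_nsmul]
  simp only [sum_powersetCard_sum_powersetCard _ f hsr, hf.sum_powersetCard_compl]
  split_ifs with hj
  · subst hj
    rw [smul_sum, smul_sum]
    refine sum_congr rfl fun w hw ↦ ?_
    obtain ⟨-, rfl⟩ := mem_powersetCard.1 hw
    rw [powersetCard_self, sum_singleton, card_compl, smul_comm, Nat.sub_sub, two_mul]
  · refine sum_eq_zero fun w hw ↦ ?_
    have hws : #w < s := (mem_powersetCard.1 hw).2.trans_lt (hjs.lt_of_ne hj)
    rw [powersetCard_eq_empty.2 hws, sum_empty, smul_zero, smul_zero]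

end IsHarmonic

end Harmonic

section HahnKernel

lemma cfall_natCast_eq_factorial_mul_choose (a k : ℕ) : cfall a k = k.factorial * a.choose k := by
  rw [cfall, ← descPochhammer_eval_eq_prod_range, descPochhammer_eval_eq_descFactorial]
  exact_mod_cast a.descFactorial_eq_factorial_mul_choose k

lemma cbinom_natCast_s9 (a k : ℕ) : cbinom a k = a.choose k := by
  rw [cbinom, cfall_natCast_eq_factorial_mul_choose,
    mul_div_cancel_left₀ _ (Nat.cast_ne_zero.2 k.factorial_ne_zero)]

lemma cfall_succ (z : ℂ) (k : ℕ) : cfall z (k + 1) = cfall z k * (z - k) :=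
  prod_range_succ _ _

/-- The coefficient of `binom(t, j)` in the Hahn kernel `λ_s^{r1,r2}(t; n)`. -/
noncomputable def hahnCoeff (n r1 r2 s j : ℕ) : ℂ :=
  (-1) ^ j * cfall s j * cfall (n - s + 1) j / (cfall (n - r1) j * cfall r2 j)

lemma hahn_natCast (n r1 r2 s t : ℕ) :
    hahn n r1 r2 s t = ∑ j ∈ range (s + 1), hahnCoeff n r1 r2 s j * t.choose j := by
  refine sum_congr rfl fun j _ ↦ ?_
  rw [cbinom_natCast_s9, hahnCoeff]
  ring

/-- The right-hand side does not depend on `r2`: this is what makes the kernel stable under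
averaging over subsets. -/
lemma hahnCoeff_mul_choose {n r1 r2 s j : ℕ} (hjr : j ≤ r2) :
    hahnCoeff n r1 r2 s j * r2.choose j =
      (-1) ^ j * cfall s j * cfall (n - s + 1) j / (cfall (n - r1) j * j.factorial) := by
  have hchoose : (r2.choose j : ℂ) ≠ 0 := Nat.cast_ne_zero.2 (Nat.choose_pos hjr).ne'
  rw [hahnCoeff, cfall_natCast_eq_factorial_mul_choose r2]
  field_simp

lemma choose_mul_hahnCoeff {n r1 r R s j : ℕ} (hjr : j ≤ r) (hrR : r ≤ R) :
    ((R - j).choose (r - j) : ℂ) * hahnCoeff n r1 r s j = R.choose r * hahnCoeff n r1 R s j := by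
  have choose_mul_choose : (R.choose r : ℂ) * r.choose j = R.choose j * (R - j).choose (r - j) :=
    mod_cast R.choose_mul hjr
  have hr := hahnCoeff_mul_choose (n := n) (r1 := r1) (s := s) hjr
  have hR := hahnCoeff_mul_choose (n := n) (r1 := r1) (s := s) (hjr.trans hrR)
  have hrj : (r.choose j : ℂ) ≠ 0 := Nat.cast_ne_zero.2 (Nat.choose_pos hjr).ne'
  refine mul_right_cancel₀ hrj ?_
  linear_combination ((R - j).choose (r - j) : ℂ) * (hr - hR) -
    hahnCoeff n r1 R s j * choose_mul_choose

lemma sum_powersetCard_hahn {Ω : Type*} [DecidableEq Ω] (S T : Finset Ω) (n r1 : ℕ) {r s : ℕ}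
    (hsr : s ≤ r) (hr : r ≤ #S) :
    ∑ x ∈ S.powersetCard r, hahn n r1 r s #(x \ T) =
      (#S).choose r * hahn n r1 #S s #(S \ T) := by
  simp only [hahn_natCast]
  rw [sum_comm, mul_sum]
  refine sum_congr rfl fun j hj ↦ ?_
  have hjr : j ≤ r := (mem_range_succ_iff.1 hj).trans hsr
  have sum_choose : ∑ x ∈ S.powersetCard r, ((#(x \ T)).choose j : ℂ) =
      (#S - j).choose (r - j) * (#(S \ T)).choose j :=
    mod_cast sum_choose_card_sdiff S T hjr
  rw [← mul_sum, sum_choose, ← mul_assoc, mul_comm (hahnCoeff _ _ _ _ _),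
    choose_mul_hahnCoeff hjr hr, mul_assoc]

lemma hahnCoeff_self_succ {n r1 s j : ℕ} (hr1 : r1 + s ≤ n) (hj : j < s) :
    ((n : ℂ) - r1 - j) * hahnCoeff n r1 s s (j + 1) =
      -((n : ℂ) - s + 1 - j) * hahnCoeff n r1 s s j := by
  have hsj : (s : ℂ) - j ≠ 0 := sub_ne_zero.2 (Nat.cast_injective.ne hj.ne')
  have hrj : (n : ℂ) - r1 - j ≠ 0 := by
    rw [← Nat.cast_sub (by lia), sub_ne_zero]
    exact Nat.cast_injective.ne (by lia)
  simp only [hahnCoeff, cfall_succ, pow_succ]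
  field_simp

/-- The closed form of the partial sums comes from Gosper's algorithm. -/
lemma sum_range_hahnCoeff_recurrence {n r1 s : ℕ} (hr1 : r1 + s ≤ n) (u : ℕ) {k : ℕ} (hk : k ≤ s) :
    ∑ j ∈ range (k + 1), hahnCoeff n r1 s s j *
        (((r1 : ℂ) - s + 1 + u) * u.choose j + ((n : ℂ) - r1 - u) * (u + 1).choose j) =
      ((n : ℂ) - s + 1 - k) * u.choose k * hahnCoeff n r1 s s k := by
  induction k with
  | zero =>
    simp only [zero_add, range_one, sum_singleton, Nat.choose_zero_right, Nat.cast_one, mul_one,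
      add_add_sub_cancel, CharP.cast_eq_zero, sub_zero]
    ring
  | succ k ih =>
    have coeff_succ := hahnCoeff_self_succ hr1 hk
    have choose_succ : (u.choose (k + 1) : ℂ) * (k + 1) = u.choose k * (u - k) := by
      rcases le_or_gt k u with hku | huk
      · exact_mod_cast u.choose_succ_right_eq k
      · simp [Nat.choose_eq_zero_of_lt huk, Nat.choose_eq_zero_of_lt (huk.trans k.lt_succ_self)]
    rw [sum_range_succ, ih (Nat.le_of_succ_le hk), Nat.choose_succ_succ]
    push_cast
    linear_combination (u.choose k : ℂ) * coeff_succ + hahnCoeff n r1 s s (k + 1) * choose_succ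

lemma hahn_self_recurrence {n r1 s u : ℕ} (hr1 : r1 + s ≤ n) (hu : u < s) :
    ((r1 : ℂ) - s + 1 + u) * hahn n r1 s s u +
      ((n : ℂ) - r1 - u) * hahn n r1 s s (u + 1 : ℕ) = 0 := by
  have telescoped := sum_range_hahnCoeff_recurrence hr1 u le_rfl
  rw [Nat.choose_eq_zero_of_lt hu, Nat.cast_zero, mul_zero, zero_mul] at telescoped
  rw [← telescoped, hahn_natCast, hahn_natCast, mul_sum, mul_sum, ← sum_add_distrib]
  exact sum_congr rfl fun j _ ↦ by ring

variable {Ω : Type*} [Fintype Ω] [DecidableEq Ω]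

lemma isHarmonic_hahn {T : Finset Ω} {s : ℕ} (hT : #T + s ≤ Fintype.card Ω) :
    IsHarmonic s fun y ↦ hahn (Fintype.card Ω) #T s s #(y \ T) := by
  intro z hz
  have card_inside : (#{a ∈ zᶜ | a ∈ T} : ℂ) = #T - s + 1 + #(z \ T) := by
    have : #{a ∈ zᶜ | a ∈ T} = #(T \ z) := congrArg card (by ext; simp [and_comm])
    have hcard : #(T \ z) + s = #T + 1 + #(z \ T) := by
      have := card_sdiff_add_card_inter T z
      have := card_sdiff_add_card_inter z T
      rw [inter_comm] at this
      lia
    rw [this]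
    linear_combination (by exact_mod_cast hcard : (#(T \ z) : ℂ) + s = #T + 1 + #(z \ T))
  have card_outside : (#{a ∈ zᶜ | a ∉ T} : ℂ) = Fintype.card Ω - #T - #(z \ T) := by
    have : ({a ∈ zᶜ | a ∉ T} : Finset Ω) = (T ∪ z \ T)ᶜ := by
      ext a
      simp only [mem_filter, mem_compl, union_sdiff_self_eq_union, compl_union, mem_inter]
      tauto
    rw [this, card_compl, Nat.cast_sub (card_le_univ _),
      card_union_of_disjoint disjoint_sdiff, Nat.cast_add, sub_sub]
  have sum_inside : ∑ a ∈ zᶜ with a ∈ T, hahn (Fintype.card Ω) #T s s #(insert a z \ T) =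
      (#T - s + 1 + #(z \ T)) * hahn (Fintype.card Ω) #T s s #(z \ T) := by
    rw [← card_inside, ← nsmul_eq_mul, ← sum_const]
    refine sum_congr rfl fun a ha ↦ ?_
    rw [insert_sdiff_of_mem _ (mem_filter.1 ha).2]
  have sum_outside : ∑ a ∈ zᶜ with a ∉ T, hahn (Fintype.card Ω) #T s s #(insert a z \ T) =
      (Fintype.card Ω - #T - #(z \ T)) * hahn (Fintype.card Ω) #T s s (#(z \ T) + 1 : ℕ) := by
    rw [← card_outside, ← nsmul_eq_mul, ← sum_const]
    refine sum_congr rfl fun a ha ↦ ?_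
    obtain ⟨haz, haT⟩ := mem_filter.1 ha
    rw [insert_sdiff_of_notMem _ haT, card_insert_of_notMem (by simp_all)]
  rw [← sum_filter_add_sum_filter_not zᶜ (· ∈ T), sum_inside, sum_outside]
  exact hahn_self_recurrence hT ((card_le_card sdiff_subset).trans_lt (by lia))

lemma IsHarmonic.sum_hahn_mul {s : ℕ} {f : Finset Ω → ℂ} (hf : IsHarmonic s f) (z : Finset Ω)
    (n : ℕ) {r2 : ℕ} (r3 : ℕ) (hs : s ≤ r2) :
    ∑ x ∈ univ.powersetCard r2, hahn n r2 r3 s #(z \ x) * ∑ y ∈ x.powersetCard s, f y =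
      (-1) ^ s * hahnCoeff n r2 r3 s s * (Fintype.card Ω - 2 * s).choose (r2 - s) *
        ∑ y ∈ z.powersetCard s, f y := by
  calc ∑ x ∈ univ.powersetCard r2, hahn n r2 r3 s #(z \ x) * ∑ y ∈ x.powersetCard s, f y
      = ∑ j ∈ range (s + 1), hahnCoeff n r2 r3 s j *
          ∑ x ∈ univ.powersetCard r2, (#(z \ x)).choose j • ∑ y ∈ x.powersetCard s, f y := by
        simp only [hahn_natCast, sum_mul, mul_sum _ _ (hahnCoeff _ _ _ _ _), nsmul_eq_mul,
          mul_assoc]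
        exact sum_comm
    _ = ∑ j ∈ range (s + 1), hahnCoeff n r2 r3 s j * if j = s then
          (-1 : ℤ) ^ s • (Fintype.card Ω - 2 * s).choose (r2 - s) • ∑ y ∈ z.powersetCard s, f y
          else 0 :=
        sum_congr rfl fun j hj ↦ by
          rw [hf.sum_choose_card_sdiff_nsmul z (mem_range_succ_iff.1 hj) hs]
    _ = _ := by
        rw [sum_eq_single_of_mem s (self_mem_range_succ s) fun j _ hj ↦ by rw [if_neg hj, mul_zero],
          if_pos rfl, zsmul_eq_mul, nsmul_eq_mul]
        push_cast
        ring

lemma hahnCoeff_self_mul_choose {n r2 r3 s : ℕ} (hr2 : r2 + s ≤ n) (hr3 : s ≤ r3) :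
    (-1) ^ s * hahnCoeff n r2 r3 s s * r3.choose s * (n - r2).choose s = (n - s + 1).choose s := by
  have cast_sub_r2 : (n : ℂ) - r2 = (n - r2 : ℕ) := (Nat.cast_sub (by lia)).symm
  have cast_sub_s : (n : ℂ) - s + 1 = (n - s + 1 : ℕ) := by
    rw [Nat.cast_succ, Nat.cast_sub (by lia)]
  have neg_one_mul_self : (-1 : ℂ) ^ s * (-1) ^ s = 1 := by rw [← mul_pow]; norm_num
  have hs : (s.factorial : ℂ) ≠ 0 := Nat.cast_ne_zero.2 s.factorial_ne_zero
  have hchoose : ((n - r2).choose s : ℂ) ≠ 0 := Nat.cast_ne_zero.2 (Nat.choose_pos (by lia)).ne'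
  rw [mul_assoc _ (hahnCoeff _ _ _ _ _), hahnCoeff_mul_choose hr3, cast_sub_r2, cast_sub_s]
  simp only [cfall_natCast_eq_factorial_mul_choose, Nat.choose_self]
  field_simp
  linear_combination ((n - s + 1).choose s : ℂ) * neg_one_mul_self

end HahnKernel

section Binomial

lemma choose_sub_choose_pred_mul {R : Type*} [CommRing R] {n s : ℕ} (hs : s ≤ n) :
    ((n.choose s : R) - if s = 0 then 0 else (n.choose (s - 1) : R)) * (n - s + 1) =
      n.choose s * (n - 2 * s + 1) := by
  cases s with
  | zero => simp
  | succ k =>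
    have hk : k ≤ n := Nat.le_of_succ_le hs
    have choose_succ : (n.choose (k + 1) : R) * (k + 1) = n.choose k * (n - k) := by
      rw [← Nat.cast_sub hk]
      exact_mod_cast congrArg (Nat.cast (R := R)) (n.choose_succ_right_eq k)
    rw [if_neg k.succ_ne_zero, Nat.add_sub_cancel]
    push_cast
    linear_combination choose_succ

lemma choose_mul_choose_sub_choose_pred {K : Type*} [Field K] [CharZero K] {n s : ℕ}
    (hs : 2 * s ≤ n) :
    ((n - s + 1).choose s : K) * (n.choose s - if s = 0 then 0 else (n.choose (s - 1) : K)) =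
      n.choose s * (n - s).choose s := by
  have cast_sub : ((n - s : ℕ) : K) = n - s := Nat.cast_sub (by lia)
  have choose_succ : ((n - s).choose s : K) * (n - s + 1) =
      (n - s + 1).choose s * (n - 2 * s + 1) := by
    have h : ((n - s).choose s : K) * (n - s + 1 : ℕ) =
        (n - s + 1).choose s * (n - s + 1 - s : ℕ) := mod_cast (n - s).choose_mul_succ_eq s
    rw [Nat.cast_sub (show s ≤ n - s + 1 by lia), Nat.cast_succ, cast_sub] at h
    linear_combination h
  have succ_ne_zero : (n : K) - s + 1 ≠ 0 := by
    rw [← cast_sub]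
    exact (n - s).cast_add_one_ne_zero
  refine mul_right_cancel₀ succ_ne_zero ?_
  linear_combination ((n - s + 1).choose s : K) *
    choose_sub_choose_pred_mul (R := K) (show s ≤ n by lia) - (n.choose s : K) * choose_succ

/-- Both sides count the ways to split an `n`-set into parts of sizes `s`, `s`, `r - s` and
`n - r - s`. -/
lemma choose_mul_choose_mul_choose {r s : ℕ} (hs : s ≤ r) (n : ℕ) :
    n.choose s * (n - s).choose s * (n - 2 * s).choose (r - s) =
      n.choose r * r.choose s * (n - r).choose s := by
  have h := (n - s).choose_mul (Nat.sub_le r s)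
  rw [Nat.choose_symm hs, (n - s).choose_mul hs, Nat.sub_sub_self hs,
    show n - s - (r - s) = n - r by lia, show n - s - s = n - 2 * s by lia] at h
  rw [n.choose_mul hs, mul_assoc, mul_assoc, h]

end Binomial

section Convolution

variable {Ω : Type*} [Fintype Ω] [DecidableEq Ω]

lemma choose_mul_sum_hahn_mul_hahn {r2 s : ℕ} {x1 x3 : Finset Ω} (h1 : #x1 + s ≤ Fintype.card Ω)
    (hs2 : s ≤ r2) (hs3 : s ≤ #x3) :
    r2.choose s * ∑ x2 ∈ univ.powersetCard r2, hahn (Fintype.card Ω) r2 #x3 s #(x3 \ x2) *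
        hahn (Fintype.card Ω) #x1 r2 s #(x2 \ x1) =
      (-1) ^ s * hahnCoeff (Fintype.card Ω) r2 #x3 s s * (#x3).choose s *
        (Fintype.card Ω - 2 * s).choose (r2 - s) *
        hahn (Fintype.card Ω) #x1 #x3 s #(x3 \ x1) := by
  have average (x : Finset Ω) (hx : s ≤ #x) :=
    sum_powersetCard_hahn x x1 (Fintype.card Ω) #x1 le_rfl hx
  calc _ = ∑ x ∈ univ.powersetCard r2, hahn (Fintype.card Ω) r2 #x3 s #(x3 \ x) *
          ∑ y ∈ x.powersetCard s, hahn (Fintype.card Ω) #x1 s s #(y \ x1) := by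
        rw [mul_sum]
        refine sum_congr rfl fun x hx ↦ ?_
        obtain ⟨-, rfl⟩ := mem_powersetCard.1 hx
        rw [average x hs2]
        ring
    _ = _ := by
        rw [(isHarmonic_hahn h1).sum_hahn_mul x3 _ _ hs2, average x3 hs3]
        ring

lemma sum_hahn_mul_hahn {r2 s : ℕ} {x1 x3 : Finset Ω} (h1 : #x1 + s ≤ Fintype.card Ω)
    (hs2 : s ≤ r2) (h2 : r2 + s ≤ Fintype.card Ω) (hs3 : s ≤ #x3) :
    ∑ x2 ∈ univ.powersetCard r2, hahn (Fintype.card Ω) r2 #x3 s #(x3 \ x2) *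
        hahn (Fintype.card Ω) #x1 r2 s #(x2 \ x1) =
      (Fintype.card Ω).choose r2 / ((Fintype.card Ω).choose s -
          if s = 0 then 0 else ((Fintype.card Ω).choose (s - 1) : ℂ)) *
        hahn (Fintype.card Ω) #x1 #x3 s #(x3 \ x1) := by
  have convolution := choose_mul_sum_hahn_mul_hahn h1 hs2 hs3
  have leading_coeff := hahnCoeff_self_mul_choose h2 hs3
  generalize Fintype.card Ω = n at *
  have dim_eq := choose_mul_choose_sub_choose_pred (K := ℂ) (show 2 * s ≤ n by lia)
  have multinomial : (n.choose s * (n - s).choose s * (n - 2 * s).choose (r2 - s) : ℂ) =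
      n.choose r2 * r2.choose s * (n - r2).choose s := mod_cast choose_mul_choose_mul_choose hs2 n
  have choose_ne_zero {a b : ℕ} (h : b ≤ a) : (a.choose b : ℂ) ≠ 0 :=
    Nat.cast_ne_zero.2 (Nat.choose_pos h).ne'
  have dim_ne_zero : (n.choose s : ℂ) - (if s = 0 then 0 else (n.choose (s - 1) : ℂ)) ≠ 0 :=
    right_ne_zero_of_mul (dim_eq.trans_ne
      (mul_ne_zero (choose_ne_zero (by lia)) (choose_ne_zero (by lia))))
  rw [div_mul_eq_mul_div, eq_div_iff dim_ne_zero]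
  refine mul_left_cancel₀ (mul_ne_zero (choose_ne_zero hs2)
    (choose_ne_zero (show s ≤ n - r2 by lia))) ?_
  set dim : ℂ := n.choose s - if s = 0 then 0 else (n.choose (s - 1) : ℂ)
  set h := hahn n #x1 #x3 s #(x3 \ x1)
  set m : ℂ := ((n - 2 * s).choose (r2 - s) : ℂ)
  linear_combination ((n - r2).choose s * dim) * convolution +
    m * h * dim * leading_coeff + m * h * dim_eq + h * multinomial

end Convolution

end

/-- Multiplication table: `Λ_s^{r2,r3} ∘ Λ_s^{r1,r2} = (binom(n,r2)/(binom(n,s) - binom(n,s-1))) Λ_s^{r1,r3}`,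
where `binom(n,-1) = 0`. -/
theorem stmt_9 {Ω : Type*} [Fintype Ω] [DecidableEq Ω] (n r1 r2 r3 s : ℕ)
    (hn : Fintype.card Ω = n) (h1 : r1 ≤ n) (h2 : r2 ≤ n) (h3 : r3 ≤ n)
    (hs1 : s ≤ min r1 (n - r1)) (hs2 : s ≤ min r2 (n - r2)) (hs3 : s ≤ min r3 (n - r3))
    (ψ : {x : Finset Ω // x.card = r1} → ℂ) :
    Lam Ω n r2 r3 s (Lam Ω n r1 r2 s ψ) =
      ((n.choose r2 : ℂ) /
          ((n.choose s : ℂ) - if s = 0 then 0 else (n.choose (s - 1) : ℂ))) •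
        Lam Ω n r1 r3 s ψ := by
  rw [le_min_iff] at hs1 hs2 hs3
  subst hn
  ext ⟨x3, rfl⟩
  simp only [Lam, Pi.smul_apply, smul_eq_mul, Finset.mul_sum]
  rw [Finset.sum_comm]
  refine Finset.sum_congr rfl fun ⟨x1, hx1⟩ _ ↦ ?_
  subst hx1
  have convolution := sum_hahn_mul_hahn (x1 := x1) (x3 := x3) (r2 := r2) (s := s)
    (by lia) hs2.1 (by lia) hs3.1
  rw [← mul_assoc, ← convolution, Finset.sum_mul,
    Finset.sum_subtype _ fun _ ↦ Finset.mem_powersetCard_univ]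
  exact Finset.sum_congr rfl fun x2 _ ↦ (mul_assoc _ _ _).symm
end
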